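/- Let 𝒜 be an additive category and let {𝒲_i}_{i ∈ I} be a family of weakly exact structures on 𝒜. Then the intersection ⋂_{i ∈ I} 𝒲_i is again a weakly exact structure on 𝒜. -/

import Mathlib

open CategoryTheory CategoryTheory.Limits ZeroObject

universe w v u

namespace WeaklyExactPaper

section Preamble

variable {C : Type u} [Category.{v} C] [Preadditive C] [HasZeroObject C] [HasBinaryBiproducts C]

/-- `(i, d)` is a kernel–cokernel pair: `i` is a kernel of `d` and `d` is a cokernel of `i`. -/
structure IsKernelCokernelPair {A B Z : C} (i : A ⟶ B) (d : B ⟶ Z) : Prop where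
  w : i ≫ d = 0
  isKernel : Nonempty (IsLimit (KernelFork.ofι i w))
  isCokernel : Nonempty (IsColimit (CokernelCofork.ofπ d w))

/-- Isomorphism of composable pairs `(i, d) ≅ (i', d')`. -/
def PairIso {A B Z A' B' Z' : C} (i : A ⟶ B) (d : B ⟶ Z) (i' : A' ⟶ B') (d' : B' ⟶ Z') : Prop :=
  ∃ (eA : A ≅ A') (eB : B ≅ B') (eZ : Z ≅ Z'),
    i ≫ eB.hom = eA.hom ≫ i' ∧ d ≫ eZ.hom = eB.hom ≫ d'

/-- `f` is a kernel of some morphism. -/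
def IsSomeKernel {A B : C} (f : A ⟶ B) : Prop :=
  ∃ (Z : C) (g : B ⟶ Z) (w : f ≫ g = 0), Nonempty (IsLimit (KernelFork.ofι f w))

/-- `g` is a cokernel of some morphism. -/
def IsSomeCokernel {B Z : C} (g : B ⟶ Z) : Prop :=
  ∃ (A : C) (f : A ⟶ B) (w : f ≫ g = 0), Nonempty (IsColimit (CokernelCofork.ofπ g w))

/-- `f` admits a cokernel. -/
def AdmitsCokernel {A B : C} (f : A ⟶ B) : Prop :=
  ∃ (Z : C) (g : B ⟶ Z) (w : f ≫ g = 0), Nonempty (IsColimit (CokernelCofork.ofπ g w))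

/-- `g` admits a kernel. -/
def AdmitsKernel {B Z : C} (g : B ⟶ Z) : Prop :=
  ∃ (A : C) (f : A ⟶ B) (w : f ≫ g = 0), Nonempty (IsLimit (KernelFork.ofι f w))

/-- A weakly exact structure on an additive category: a class of kernel–cokernel pairs,
closed under isomorphisms of composable pairs and binary direct sums, containing the pairs
`(1_X, X ⟶ 0)` and `(0 ⟶ X, 1_X)`, and satisfying the pushout axiom (E2) and the
pullback axiom (E2)ᵒᵖ. -/
structure WeaklyExactStructure (C : Type u) [Category.{v} C] [Preadditive C]
    [HasZeroObject C] [HasBinaryBiproducts C] where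
  W : ∀ ⦃A B Z : C⦄, (A ⟶ B) → (B ⟶ Z) → Prop
  kc_of_mem : ∀ {A B Z : C} {i : A ⟶ B} {d : B ⟶ Z}, W i d → IsKernelCokernelPair i d
  iso_closed : ∀ {A B Z A' B' Z' : C} {i : A ⟶ B} {d : B ⟶ Z} {i' : A' ⟶ B'} {d' : B' ⟶ Z'},
    W i d → PairIso i d i' d' → W i' d'
  sum_mem : ∀ {A₁ B₁ Z₁ A₂ B₂ Z₂ : C} {i₁ : A₁ ⟶ B₁} {d₁ : B₁ ⟶ Z₁} {i₂ : A₂ ⟶ B₂}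
    {d₂ : B₂ ⟶ Z₂}, W i₁ d₁ → W i₂ d₂ → W (biprod.map i₁ i₂) (biprod.map d₁ d₂)
  id_zero_mem : ∀ X : C, W (𝟙 X) (0 : X ⟶ (0 : C))
  zero_id_mem : ∀ X : C, W (0 : (0 : C) ⟶ X) (𝟙 X)
  pushout_mem : ∀ {A B Z A' : C} {i : A ⟶ B} {d : B ⟶ Z}, W i d → ∀ t : A ⟶ A',
    ∃ (S : C) (g : B ⟶ S) (i' : A' ⟶ S), IsPushout i t g i' ∧ ∃ (Z' : C) (d' : S ⟶ Z'), W i' d'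
  pullback_mem : ∀ {A B Z D : C} {i : A ⟶ B} {d : B ⟶ Z}, W i d → ∀ t : D ⟶ Z,
    ∃ (P : C) (p : P ⟶ B) (q : P ⟶ D), IsPullback p q d t ∧ ∃ (A'' : C) (i'' : A'' ⟶ P), W i'' q

/-- `i` is an admissible monic of `𝒲`. -/
def AdmissibleMonic (𝒲 : WeaklyExactStructure C) {A B : C} (i : A ⟶ B) : Prop :=
  ∃ (Z : C) (d : B ⟶ Z), 𝒲.W i d

/-- `d` is an admissible epic of `𝒲`. -/
def AdmissibleEpic (𝒲 : WeaklyExactStructure C) {B Z : C} (d : B ⟶ Z) : Prop :=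
  ∃ (A : C) (i : A ⟶ B), 𝒲.W i d

/-- `(i, d)` is a split kernel–cokernel pair. -/
def IsSplitPair {A B Z : C} (i : A ⟶ B) (d : B ⟶ Z) : Prop :=
  ∃ (X Y : C), PairIso (biprod.inl : X ⟶ X ⊞ Y) (biprod.snd : X ⊞ Y ⟶ Y) i d

end Preamble

section Statement

variable {C : Type u} [Category.{v} C] [Preadditive C] [HasZeroObject C] [HasBinaryBiproducts C]

/-!
The only axioms that do not pass to the intersection pair by pair are (E2) and its dual, because
each structure supplies its own pushout and its own cokernel. Pushouts and cokernels are unique up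
to isomorphism and each structure is closed under isomorphism of pairs. Hence a morphism that is an
admissible monic for every structure forms, with any one of its cokernels, a pair lying in all of
them, and being an admissible monic is inherited along every pushout square, whichever structure
produced that square. The argument for admissible epics is dual.
-/

section PairIso

omit [HasZeroObject C] [HasBinaryBiproducts C]

theorem PairIso.of_isCokernel {A B Z A' B' Z' : C} {i : A ⟶ B} {d : B ⟶ Z} {i' : A' ⟶ B'}
    {d' : B' ⟶ Z'} {w : i ≫ d = 0} {w' : i' ≫ d' = 0} (hd : IsColimit (CokernelCofork.ofπ d w))
    (hd' : IsColimit (CokernelCofork.ofπ d' w')) (eA : A ≅ A') (eB : B ≅ B')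
    (comm : i ≫ eB.hom = eA.hom ≫ i') : PairIso i d i' d' :=
  let φ : Arrow.mk i ≅ Arrow.mk i' := Arrow.isoMk eA eB comm.symm
  ⟨eA, eB, CokernelCofork.mapIsoOfIsColimit hd hd' φ, comm,
    CokernelCofork.π_mapOfIsColimit hd (CokernelCofork.ofπ d' w') φ.hom⟩

theorem PairIso.of_isKernel {A B Z A' B' Z' : C} {i : A ⟶ B} {d : B ⟶ Z} {i' : A' ⟶ B'}
    {d' : B' ⟶ Z'} {w : i ≫ d = 0} {w' : i' ≫ d' = 0} (hi : IsLimit (KernelFork.ofι i w))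
    (hi' : IsLimit (KernelFork.ofι i' w')) (eB : B ≅ B') (eZ : Z ≅ Z')
    (comm : d ≫ eZ.hom = eB.hom ≫ d') : PairIso i d i' d' :=
  let φ : Arrow.mk d ≅ Arrow.mk d' := Arrow.isoMk eB eZ comm.symm
  ⟨KernelFork.mapIsoOfIsLimit hi hi' φ, eB, eZ,
    (KernelFork.mapOfIsLimit_ι (KernelFork.ofι i w) hi' φ.hom).symm, comm⟩

end PairIso

section Admissible

variable {𝒲 : WeaklyExactStructure C}

theorem AdmissibleMonic.W_of_isCokernel {A B Z : C} {i : A ⟶ B} {d : B ⟶ Z} {w : i ≫ d = 0}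
    (h : AdmissibleMonic 𝒲 i) (hd : IsColimit (CokernelCofork.ofπ d w)) : 𝒲.W i d := by
  obtain ⟨Z', d', h'⟩ := h
  obtain ⟨hd'⟩ := (𝒲.kc_of_mem h').isCokernel
  exact 𝒲.iso_closed h' (.of_isCokernel hd' hd (Iso.refl A) (Iso.refl B) (by simp))

theorem AdmissibleEpic.W_of_isKernel {A B Z : C} {i : A ⟶ B} {d : B ⟶ Z} {w : i ≫ d = 0}
    (h : AdmissibleEpic 𝒲 d) (hi : IsLimit (KernelFork.ofι i w)) : 𝒲.W i d := by
  obtain ⟨A', i', h'⟩ := h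
  obtain ⟨hi'⟩ := (𝒲.kc_of_mem h').isKernel
  exact 𝒲.iso_closed h' (.of_isKernel hi' hi (Iso.refl B) (Iso.refl Z) (by simp))

theorem AdmissibleMonic.comp_iso {A B B' : C} {i : A ⟶ B} (h : AdmissibleMonic 𝒲 i)
    (e : B ≅ B') : AdmissibleMonic 𝒲 (i ≫ e.hom) := by
  obtain ⟨Z, d, hd⟩ := h
  exact ⟨Z, e.inv ≫ d, 𝒲.iso_closed hd ⟨Iso.refl A, e, Iso.refl Z, by simp, by simp⟩⟩

theorem AdmissibleEpic.iso_comp {B' B Z : C} {d : B ⟶ Z} (h : AdmissibleEpic 𝒲 d)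
    (e : B' ≅ B) : AdmissibleEpic 𝒲 (e.hom ≫ d) := by
  obtain ⟨A, i, hi⟩ := h
  exact ⟨A, i ≫ e.inv, 𝒲.iso_closed hi ⟨Iso.refl A, e.symm, Iso.refl Z, by simp, by simp⟩⟩

theorem AdmissibleMonic.of_isPushout {A B A' S : C} {i : A ⟶ B} {t : A ⟶ A'} {g : B ⟶ S}
    {i' : A' ⟶ S} (h : AdmissibleMonic 𝒲 i) (sq : IsPushout i t g i') :
    AdmissibleMonic 𝒲 i' := by
  obtain ⟨Z, d, hd⟩ := h
  obtain ⟨S', g', i'', sq', h''⟩ := 𝒲.pushout_mem hd t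
  rw [← sq'.inr_isoIsPushout_hom _ _ sq]
  exact AdmissibleMonic.comp_iso h'' _

theorem AdmissibleEpic.of_isPullback {B Z D P : C} {d : B ⟶ Z} {t : D ⟶ Z} {p : P ⟶ B}
    {q : P ⟶ D} (h : AdmissibleEpic 𝒲 d) (sq : IsPullback p q d t) :
    AdmissibleEpic 𝒲 q := by
  obtain ⟨A, i, hi⟩ := h
  obtain ⟨P', p', q', sq', h'⟩ := 𝒲.pullback_mem hi t
  rw [← sq.isoIsPullback_hom_snd _ _ sq']
  exact AdmissibleEpic.iso_comp h' _

end Admissible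

namespace WeaklyExactStructure

variable {ι : Sort*} [Nonempty ι] {F : ι → WeaklyExactStructure C}

theorem exists_forall_W_of_forall_admissibleMonic {A B : C} {i : A ⟶ B}
    (h : ∀ k, AdmissibleMonic (F k) i) : ∃ (Z : C) (d : B ⟶ Z), ∀ k, (F k).W i d := by
  obtain ⟨k₀⟩ := ‹Nonempty ι›
  obtain ⟨Z, d, hd⟩ := h k₀
  obtain ⟨d_cokernel⟩ := ((F k₀).kc_of_mem hd).isCokernel
  exact ⟨Z, d, fun k => (h k).W_of_isCokernel d_cokernel⟩

theorem exists_forall_W_of_forall_admissibleEpic {B Z : C} {d : B ⟶ Z}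
    (h : ∀ k, AdmissibleEpic (F k) d) : ∃ (A : C) (i : A ⟶ B), ∀ k, (F k).W i d := by
  obtain ⟨k₀⟩ := ‹Nonempty ι›
  obtain ⟨A, i, hi⟩ := h k₀
  obtain ⟨i_kernel⟩ := ((F k₀).kc_of_mem hi).isKernel
  exact ⟨A, i, fun k => (h k).W_of_isKernel i_kernel⟩

variable (F) in
/-- The intersection of a nonempty family of weakly exact structures, consisting of the pairs
that lie in every member. -/
def iInter : WeaklyExactStructure C where
  W _ _ _ i d := ∀ k, (F k).W i d
  kc_of_mem h := (F (Classical.arbitrary ι)).kc_of_mem (h _)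
  iso_closed h e k := (F k).iso_closed (h k) e
  sum_mem h₁ h₂ k := (F k).sum_mem (h₁ k) (h₂ k)
  id_zero_mem X k := (F k).id_zero_mem X
  zero_id_mem X k := (F k).zero_id_mem X
  pushout_mem h t := by
    obtain ⟨S, g, i', sq, -⟩ := (F (Classical.arbitrary ι)).pushout_mem (h _) t
    exact ⟨S, g, i', sq, exists_forall_W_of_forall_admissibleMonic fun k =>
      AdmissibleMonic.of_isPushout ⟨_, _, h k⟩ sq⟩
  pullback_mem h t := by
    obtain ⟨P, p, q, sq, -⟩ := (F (Classical.arbitrary ι)).pullback_mem (h _) t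
    exact ⟨P, p, q, sq, exists_forall_W_of_forall_admissibleEpic fun k =>
      AdmissibleEpic.of_isPullback ⟨_, _, h k⟩ sq⟩

end WeaklyExactStructure

/-- The intersection of a (nonempty) family of weakly exact structures is again a weakly
exact structure. -/
theorem statement7 (ι : Type w) [Nonempty ι] (F : ι → WeaklyExactStructure C) :
    ∃ 𝒲 : WeaklyExactStructure C, ∀ {A B Z : C} (i : A ⟶ B) (d : B ⟶ Z),
      𝒲.W i d ↔ ∀ k : ι, (F k).W i d :=
  ⟨WeaklyExactStructure.iInter F, fun _ _ => Iff.rfl⟩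

end Statement

end WeaklyExactPaper
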